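/- arXiv:0704.1564 — 2 statements merged into one kernel-verified Lean document; each statement's English description precedes it below -/
import Mathlib

section
/- Pressure lower bound for eigenvectors, weighted version: let H be a complex Hilbert space, (π_k)_{k=1}^N a partition of unity of bounded operators on H, v = (v_k)_{k=1}^N a family of positive reals with V = max_k v_k, O a bounded operator on H, U a unitary operator on H, and ε ≥ 0. Set c = max_{j,k} v_j · v_k · ‖π_j U π_k* O‖ (operator norm). If ψ ∈ H is a unit vector with Uψ = λψ for some scalar λ with |λ| = 1, and ‖(Id − O) π_k ψ‖ ≤ ε for all k = 1,…,N, then p_{π,v}(ψ) ≥ −log( c + N·V²·ε ). -/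
open Finset

/-- `η(s) = -s log s`. -/
noncomputable def eta (s : ℝ) : ℝ := -s * Real.log s

/-- Pressure of a unit vector with respect to a quantum partition of unity `π`
and weights `v`. -/
noncomputable def pressure {H : Type*} [NormedAddCommGroup H] [InnerProductSpace ℂ H]
    {N : ℕ} (π : Fin N → H →L[ℂ] H) (v : Fin N → ℝ) (ψ : H) : ℝ :=
  (∑ k, eta (‖π k ψ‖ ^ 2)) - ∑ k, ‖π k ψ‖ ^ 2 * Real.log (v k ^ 2)

/-!
Let `λ` be the eigenvalue and write `a k = ‖π k ψ‖`. The proof interpolates the number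
`⟪ψ, U ψ⟫ = λ` by the analytic family `F z = ⟪Ψ (conj z), U (Ψ z)⟫`, where
`Ψ z = ∑ k, (v k * a k) ^ z • (π k)† (π k ψ)`.

On the line `re z = 0` the coefficients are unimodular, and since `w ↦ (π k w)` is an isometry its
adjoint is a contraction, so `‖F‖ ≤ 1`. On the line `re z = 1` split each `π k ψ` into
`O (π k ψ)` and the remainder: the first part contributes at most
`∑ j, ∑ k, a j ^ 2 * a k ^ 2 * c = c`, and the second at most `V * (V * ε)`, again because the
adjoint is a contraction. By the three lines theorem `‖F t‖ ≤ (c + V ^ 2 * ε) ^ t` for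
`0 ≤ t ≤ 1`. Both sides equal `1` at `t = 0`, so their derivatives there are comparable; a
contraction and its adjoint share their unimodular eigenvectors, which makes the logarithmic
derivative of `F` at `0` equal to `2 * ∑ k, a k ^ 2 * log (v k * a k)`, that is, to
minus the pressure of `ψ`.
-/

open ContinuousLinearMap
open scoped ComplexConjugate

section ThreeLines

open Complex HadamardThreeLines

variable {E : Type*} [NormedAddCommGroup E] [InnerProductSpace ℂ E] {f : ℂ → E} {f' : E} {C : ℝ}

lemma norm_le_rpow_of_three_lines (hf : DiffContOnCl ℂ f (verticalStrip 0 1))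
    (hbdd : BddAbove ((norm ∘ f) '' verticalClosedStrip 0 1))
    (h₀ : ∀ z : ℂ, z.re = 0 → ‖f z‖ ≤ 1) (h₁ : ∀ z : ℂ, z.re = 1 → ‖f z‖ ≤ C)
    {t : ℝ} (ht : t ∈ Set.Icc 0 1) : ‖f t‖ ≤ C ^ t := by
  simpa using norm_le_interp_of_mem_verticalClosedStrip' (z := (t : ℂ)) one_pos
    (by simpa [verticalClosedStrip] using ht) hf hbdd h₀ h₁

lemma le_deriv_of_le_on_Icc {g h : ℝ → ℝ} {g' h' a b : ℝ} (hab : a < b)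
    (hg : HasDerivWithinAt g g' (Set.Icc a b) a) (hh : HasDerivWithinAt h h' (Set.Icc a b) a)
    (heq : g a = h a) (hle : ∀ t ∈ Set.Icc a b, g t ≤ h t) : g' ≤ h' := by
  have hmin : IsMinOn (fun t => h t - g t) (Set.Icc a b) a := fun t ht => by
    simpa [heq] using hle t ht
  have hcone : b - a ∈ posTangentConeAt (Set.Icc a b) a :=
    sub_mem_posTangentConeAt_of_segment_subset (segment_eq_Icc hab.le).le
  have hnonneg : 0 ≤ (b - a) * (h' - g') := by
    simpa using hmin.localize.hasFDerivWithinAt_nonneg (hh.fun_sub hg).hasFDerivWithinAt hcone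
  exact sub_nonneg.1 (nonneg_of_mul_nonneg_right hnonneg (sub_pos.2 hab))

theorem re_inner_deriv_le_log_of_three_lines (hf : DiffContOnCl ℂ f (verticalStrip 0 1))
    (hbdd : BddAbove ((norm ∘ f) '' verticalClosedStrip 0 1))
    (h₀ : ∀ z : ℂ, z.re = 0 → ‖f z‖ ≤ 1) (h₁ : ∀ z : ℂ, z.re = 1 → ‖f z‖ ≤ C)
    (hf' : HasDerivAt f f' 0) (hnorm : ‖f 0‖ = 1) (hC : 0 < C) :
    (inner ℂ (f 0) f').re ≤ Real.log C := by
  have hinner : HasDerivAt (fun t : ℝ => (inner ℂ (f 0) (f t)).re) (inner ℂ (f 0) f').re 0 :=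
    ((innerSL ℂ (f 0)).hasFDerivAt.comp_hasDerivAt 0 hf').real_of_complex
  have hpow : HasDerivAt (fun t : ℝ => C ^ t) (Real.log C) 0 := by
    simpa using (hasDerivAt_id (0 : ℝ)).const_rpow hC
  refine le_deriv_of_le_on_Icc zero_lt_one hinner.hasDerivWithinAt hpow.hasDerivWithinAt ?_
    fun t ht => ?_
  · simp [inner_self_eq_norm_sq_to_K, hnorm]
  · calc (inner ℂ (f 0) (f t)).re ≤ ‖f 0‖ * ‖f t‖ := re_inner_le_norm (𝕜 := ℂ) _ _
      _ = ‖f t‖ := by rw [hnorm, one_mul]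
      _ ≤ C ^ t := norm_le_rpow_of_three_lines hf hbdd h₀ h₁ ht

theorem exp_re_inner_deriv_le_of_three_lines (hf : DiffContOnCl ℂ f (verticalStrip 0 1))
    (hbdd : BddAbove ((norm ∘ f) '' verticalClosedStrip 0 1))
    (h₀ : ∀ z : ℂ, z.re = 0 → ‖f z‖ ≤ 1) (h₁ : ∀ z : ℂ, z.re = 1 → ‖f z‖ ≤ C)
    (hf' : HasDerivAt f f' 0) (hnorm : ‖f 0‖ = 1) :
    Real.exp (inner ℂ (f 0) f').re ≤ C := by
  have hC : 0 ≤ C := (norm_nonneg _).trans (h₁ 1 one_re)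
  refine le_of_forall_gt_imp_ge_of_dense fun B hB => ?_
  have hB₀ : 0 < B := hC.trans_lt hB
  exact (Real.le_log_iff_exp_le hB₀).1 <| re_inner_deriv_le_log_of_three_lines hf hbdd h₀
    (fun z hz => (h₁ z hz).trans hB.le) hf' hnorm hB₀

end ThreeLines

section ExpSum

open Complex HadamardThreeLines

variable {ι E : Type*} [Fintype ι] [NormedAddCommGroup E] [NormedSpace ℂ E]

/-- The exponential sum `z ↦ ∑ i, e ^ (z * ω i) • a i` with real frequencies `ω` and vector
coefficients `a`. -/
noncomputable def expSum (ω : ι → ℝ) (a : ι → E) (z : ℂ) : E := ∑ i, cexp (z * ω i) • a i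

variable (ω : ι → ℝ) (a : ι → E)

lemma expSum_zero : expSum ω a 0 = ∑ i, a i := by simp [expSum]

lemma hasDerivAt_expSum (z : ℂ) :
    HasDerivAt (expSum ω a) (expSum ω (fun i => (ω i : ℂ) • a i) z) z := by
  refine HasDerivAt.fun_sum fun i _ => ?_
  simpa only [id, one_mul, smul_smul] using
    ((hasDerivAt_id z).mul_const (ω i : ℂ)).cexp.smul_const (a i)

lemma differentiable_expSum : Differentiable ℂ (expSum ω a) :=
  fun z => (hasDerivAt_expSum ω a z).differentiableAt

lemma bddAbove_norm_expSum_verticalClosedStrip :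
    BddAbove ((norm ∘ expSum ω a) '' verticalClosedStrip 0 1) := by
  refine ⟨∑ i, Real.exp |ω i| * ‖a i‖, ?_⟩
  rintro _ ⟨z, ⟨hz₀, hz₁⟩, rfl⟩
  refine (norm_sum_le _ _).trans (sum_le_sum fun i _ => ?_)
  rw [norm_smul, norm_exp, re_mul_ofReal]
  gcongr
  calc z.re * ω i ≤ |z.re * ω i| := le_abs_self _
    _ = z.re * |ω i| := by rw [abs_mul, abs_of_nonneg hz₀]
    _ ≤ |ω i| := mul_le_of_le_one_left (abs_nonneg _) hz₁

lemma inner_expSum_conj {H : Type*} [NormedAddCommGroup H] [InnerProductSpace ℂ H]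
    (b : ι → H) (U : H →L[ℂ] H) (z : ℂ) :
    inner ℂ (expSum ω b (conj z)) (U (expSum ω b z)) =
      expSum (fun p : ι × ι => ω p.1 + ω p.2) (fun p => inner ℂ (b p.1) (U (b p.2))) z := by
  simp only [expSum, map_sum, map_smul, sum_inner, inner_sum, inner_smul_left, inner_smul_right,
    Fintype.sum_prod_type_right, smul_eq_mul, ← exp_conj, map_mul, conj_conj, conj_ofReal,
    ofReal_add, mul_add, exp_add, mul_sum]
  exact sum_congr rfl fun k _ => sum_congr rfl fun j _ => by ring

lemma exp_re_inner_sum_smul_le {H : Type*} [NormedAddCommGroup H] [InnerProductSpace ℂ H]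
    (b : ι → H) {C : ℝ} (h₀ : ∀ z : ℂ, z.re = 0 → ‖expSum ω b z‖ ≤ 1)
    (h₁ : ∀ z : ℂ, z.re = 1 → ‖expSum ω b z‖ ≤ C) (hb : ‖∑ i, b i‖ = 1) :
    Real.exp (inner ℂ (∑ i, b i) (∑ i, (ω i : ℂ) • b i)).re ≤ C := by
  simpa only [expSum_zero] using exp_re_inner_deriv_le_of_three_lines
    (differentiable_expSum ω b).diffContOnCl (bddAbove_norm_expSum_verticalClosedStrip ω b) h₀ h₁
    (hasDerivAt_expSum ω b 0) (by rwa [expSum_zero])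

end ExpSum

section Contraction

variable {𝕜 E : Type*} [RCLike 𝕜] [NormedAddCommGroup E] [InnerProductSpace 𝕜 E] [CompleteSpace E]

lemma adjoint_apply_eq_conj_smul_of_norm_le_one {T : E →L[𝕜] E} (hT : ‖T‖ ≤ 1) {μ : 𝕜}
    (hμ : ‖μ‖ = 1) {x : E} (hx : T x = μ • x) : adjoint T x = conj μ • x := by
  refine eq_of_norm_le_re_inner_eq_norm_sq (𝕜 := 𝕜) ?_ ?_
  · have hT' : ‖adjoint T‖ ≤ 1 := by rwa [LinearIsometryEquiv.norm_map]
    simpa [norm_smul, hμ] using (adjoint T).le_of_opNorm_le hT' x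
  · rw [inner_smul_right, adjoint_inner_left, hx, inner_smul_right, ← mul_assoc, RCLike.conj_mul,
      hμ, norm_smul, RCLike.norm_conj, hμ]
    simp

lemma inner_map_add_inner_map_of_norm_le_one {T : E →L[𝕜] E} (hT : ‖T‖ ≤ 1) {μ : 𝕜}
    (hμ : ‖μ‖ = 1) {x : E} (hx : T x = μ • x) (y : E) :
    inner 𝕜 y (T x) + inner 𝕜 x (T y) = μ * (2 * RCLike.re (inner 𝕜 x y) : ℝ) := by
  rw [← adjoint_inner_left T y x, adjoint_apply_eq_conj_smul_of_norm_le_one hT hμ hx, hx,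
    inner_smul_left, inner_smul_right, RCLike.conj_conj, ← mul_add, add_comm, ← inner_conj_symm y x,
    RCLike.add_conj]
  push_cast
  rfl

end Contraction

section EigenvectorExpSum

open Complex

variable {ι E : Type*} [Fintype ι] [NormedAddCommGroup E] [InnerProductSpace ℂ E]

lemma sum_add_smul_inner_map (ω : ι → ℝ) (b : ι → E) (U : E →L[ℂ] E) :
    ∑ p : ι × ι, ((ω p.1 + ω p.2 : ℝ) : ℂ) • inner ℂ (b p.1) (U (b p.2)) =
      inner ℂ (∑ i, (ω i : ℂ) • b i) (U (∑ i, b i)) +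
        inner ℂ (∑ i, b i) (U (∑ i, (ω i : ℂ) • b i)) := by
  simp only [map_sum, map_smul, sum_inner, inner_sum, inner_smul_left, inner_smul_right,
    conj_ofReal, Fintype.sum_prod_type_right, smul_eq_mul, ofReal_add, add_mul, sum_add_distrib,
    mul_sum]

lemma sum_inner_map (b : ι → E) (U : E →L[ℂ] E) :
    ∑ p : ι × ι, inner ℂ (b p.1) (U (b p.2)) = inner ℂ (∑ i, b i) (U (∑ i, b i)) := by
  simp only [map_sum, sum_inner, inner_sum, Fintype.sum_prod_type_right]

theorem exp_two_mul_sum_mul_re_inner_le [CompleteSpace E] {U : E →L[ℂ] E} (hU : ‖U‖ ≤ 1) {μ : ℂ}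
    (hμ : ‖μ‖ = 1) {ψ : E} (hψ : ‖ψ‖ = 1) (heig : U ψ = μ • ψ) (ω : ι → ℝ) {b : ι → E}
    (hb : ∑ i, b i = ψ) {C : ℝ}
    (h₀ : ∀ z : ℂ, z.re = 0 → ‖inner ℂ (expSum ω b (conj z)) (U (expSum ω b z))‖ ≤ 1)
    (h₁ : ∀ z : ℂ, z.re = 1 → ‖inner ℂ (expSum ω b (conj z)) (U (expSum ω b z))‖ ≤ C) :
    Real.exp (2 * ∑ i, ω i * (inner ℂ ψ (b i)).re) ≤ C := by
  have hvalue : ∑ p : ι × ι, inner ℂ (b p.1) (U (b p.2)) = μ := by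
    rw [sum_inner_map, hb, heig, inner_smul_right, inner_self_eq_norm_sq_to_K, hψ]
    simp
  have hderiv : ∑ p : ι × ι, ((ω p.1 + ω p.2 : ℝ) : ℂ) • inner ℂ (b p.1) (U (b p.2)) =
      μ * (2 * ∑ i, ω i * (inner ℂ ψ (b i)).re : ℝ) := by
    rw [sum_add_smul_inner_map, hb, inner_map_add_inner_map_of_norm_le_one hU hμ heig]
    simp only [inner_sum, inner_smul_right, map_sum, RCLike.re_to_complex, re_ofReal_mul]
    rfl
  simp only [inner_expSum_conj] at h₀ h₁
  have hexp := exp_re_inner_sum_smul_le _ _ h₀ h₁ (by rw [hvalue, hμ])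
  rwa [hvalue, hderiv, RCLike.inner_apply, mul_right_comm, mul_conj', hμ, ofReal_one, one_pow,
    one_mul, ofReal_re] at hexp

end EigenvectorExpSum

section PartitionOfUnity

variable {𝕜 ι E F : Type*} [RCLike 𝕜] [Fintype ι]
  [NormedAddCommGroup E] [InnerProductSpace 𝕜 E] [CompleteSpace E]
  [NormedAddCommGroup F] [InnerProductSpace 𝕜 F] [CompleteSpace F]

/-- A quantum partition of unity: a finite family of operators with `∑ k, adjoint (π k) ∘ π k = 1`.
The operators may take their values in a second Hilbert space. -/
def IsPartitionOfUnity (π : ι → E →L[𝕜] F) : Prop :=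
  ∑ k, adjoint (π k) ∘L π k = 1

/-- The synthesis operator `u ↦ ∑ k, adjoint (π k) (u k)` of a family of operators, the formal
adjoint of `w ↦ (π k w)`. It is only linear here, since `ι → F` does not carry the Hilbert norm. -/
noncomputable def synthesis (π : ι → E →L[𝕜] F) : (ι → F) →ₗ[𝕜] E :=
  ∑ k, (adjoint (π k)).toLinearMap ∘ₗ LinearMap.proj k

lemma synthesis_apply (π : ι → E →L[𝕜] F) (u : ι → F) :
    synthesis π u = ∑ k, adjoint (π k) (u k) := by
  simp [synthesis]

lemma inner_synthesis_left (π : ι → E →L[𝕜] F) (u : ι → F) (w : E) :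
    inner 𝕜 (synthesis π u) w = ∑ k, inner 𝕜 (u k) (π k w) := by
  simp only [synthesis_apply, sum_inner, adjoint_inner_left]

lemma norm_inner_synthesis_map_synthesis_le (π : ι → E →L[𝕜] F) (U : E →L[𝕜] E) (O : F →L[𝕜] F)
    (u w : ι → F) :
    ‖inner 𝕜 (synthesis π u) (U (synthesis π fun k => O (w k)))‖ ≤
      ∑ j, ∑ k, ‖u j‖ * (‖π j ∘L U ∘L adjoint (π k) ∘L O‖ * ‖w k‖) := by
  rw [inner_synthesis_left]
  refine norm_sum_le_of_le _ fun j _ => ?_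
  rw [synthesis_apply, map_sum, map_sum, inner_sum]
  refine norm_sum_le_of_le _ fun k _ => (norm_inner_le_norm _ _).trans ?_
  gcongr
  exact (π j ∘L U ∘L adjoint (π k) ∘L O).le_opNorm (w k)

namespace IsPartitionOfUnity

variable {π : ι → E →L[𝕜] F}

lemma synthesis_apply_self (hπ : IsPartitionOfUnity π) (w : E) :
    synthesis π (fun k => π k w) = w := by
  simpa [synthesis_apply, _root_.sum_apply] using congr($hπ w)

lemma sum_norm_sq (hπ : IsPartitionOfUnity π) (w : E) : ∑ k, ‖π k w‖ ^ 2 = ‖w‖ ^ 2 := by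
  have h := inner_synthesis_left π (fun k => π k w) w
  simp only [hπ.synthesis_apply_self, inner_self_eq_norm_sq_to_K] at h
  exact_mod_cast h.symm

lemma norm_apply_le (hπ : IsPartitionOfUnity π) (k : ι) (w : E) : ‖π k w‖ ≤ ‖w‖ := by
  refine le_of_sq_le_sq ?_ (norm_nonneg _)
  rw [← hπ.sum_norm_sq w]
  exact single_le_sum (f := fun k => ‖π k w‖ ^ 2) (fun _ _ => sq_nonneg _) (mem_univ k)

lemma norm_synthesis_sq_le (hπ : IsPartitionOfUnity π) (u : ι → F) :
    ‖synthesis π u‖ ^ 2 ≤ ∑ k, ‖u k‖ ^ 2 := by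
  set w := synthesis π u
  have hw : ‖w‖ ^ 2 ≤ ∑ k, (‖u k‖ ^ 2 + ‖π k w‖ ^ 2) / 2 :=
    calc ‖w‖ ^ 2 = RCLike.re (inner 𝕜 w w) := (inner_self_eq_norm_sq w).symm
      _ = ∑ k, RCLike.re (inner 𝕜 (u k) (π k w)) := by rw [inner_synthesis_left, map_sum]
      _ ≤ ∑ k, (‖u k‖ ^ 2 + ‖π k w‖ ^ 2) / 2 := sum_le_sum fun k _ => by
        linarith [re_inner_le_norm (𝕜 := 𝕜) (u k) (π k w), two_mul_le_add_sq ‖u k‖ ‖π k w‖]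
  rw [← sum_div, sum_add_distrib, hπ.sum_norm_sq w] at hw
  linarith

lemma norm_synthesis_le (hπ : IsPartitionOfUnity π) {u : ι → F} {ψ : E} {r : ℝ} (hr : 0 ≤ r)
    (hu : ∀ k, ‖u k‖ ≤ r * ‖π k ψ‖) : ‖synthesis π u‖ ≤ r * ‖ψ‖ := by
  refine le_of_sq_le_sq ?_ (by positivity)
  calc ‖synthesis π u‖ ^ 2 ≤ ∑ k, ‖u k‖ ^ 2 := hπ.norm_synthesis_sq_le u
    _ ≤ ∑ k, (r * ‖π k ψ‖) ^ 2 := by gcongr with k; exact hu k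
    _ = (r * ‖ψ‖) ^ 2 := by simp only [mul_pow, ← mul_sum, hπ.sum_norm_sq]

end IsPartitionOfUnity

end PartitionOfUnity

section Interpolation

open Complex

variable {ι E F : Type*} [NormedAddCommGroup E] [InnerProductSpace ℂ E]
  [NormedAddCommGroup F] [InnerProductSpace ℂ F]

/-- The frequencies `log (v k * ‖π k ψ‖)` of the interpolating family. When `π k ψ = 0` this is the
junk value `log 0 = 0`, but then the corresponding coefficient vanishes. -/
noncomputable def logWeight (π : ι → E →L[ℂ] F) (v : ι → ℝ) (ψ : E) (k : ι) : ℝ :=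
  Real.log (v k * ‖π k ψ‖)

variable {π : ι → E →L[ℂ] F} {v : ι → ℝ} {V : ℝ} {ψ : E} {z : ℂ}

lemma norm_map_cexp_mul_logWeight_smul (hv : ∀ k, 0 < v k) (hz : z.re = 1) (T : F →L[ℂ] F) (k : ι) :
    ‖T (cexp (z * logWeight π v ψ k) • π k ψ)‖ = v k * ‖π k ψ‖ * ‖T (π k ψ)‖ := by
  by_cases hk : π k ψ = 0
  · simp [hk]
  · have hpos : 0 < v k * ‖π k ψ‖ := mul_pos (hv k) (norm_pos_iff.2 hk)
    rw [map_smul, norm_smul, norm_exp, re_mul_ofReal, hz, one_mul, logWeight, Real.exp_log hpos]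

variable [Fintype ι] [CompleteSpace E] [CompleteSpace F]

/-- The family `z ↦ ∑ k, (v k * ‖π k ψ‖) ^ z • adjoint (π k) (T (π k ψ))`. For `T = 1` it
interpolates through `ψ`; other `T` occur when the pieces `π k ψ` are split by a localization. -/
noncomputable def interpolant (π : ι → E →L[ℂ] F) (v : ι → ℝ) (ψ : E) (T : F →L[ℂ] F) (z : ℂ) : E :=
  synthesis π fun k => T (cexp (z * logWeight π v ψ k) • π k ψ)

lemma interpolant_one :
    interpolant π v ψ 1 = expSum (logWeight π v ψ) fun k => adjoint (π k) (π k ψ) := by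
  ext z
  simp [interpolant, expSum, synthesis_apply]

lemma interpolant_add (S T : F →L[ℂ] F) (z : ℂ) :
    interpolant π v ψ (S + T) z = interpolant π v ψ S z + interpolant π v ψ T z := by
  simp only [interpolant, add_apply, ← map_add]
  rfl

lemma norm_interpolant_one_le_of_re_eq_zero (hπ : IsPartitionOfUnity π) (hz : z.re = 0) :
    ‖interpolant π v ψ 1 z‖ ≤ ‖ψ‖ := by
  rw [← one_mul ‖ψ‖]
  exact hπ.norm_synthesis_le zero_le_one fun k => by simp [norm_smul, norm_exp, hz]

lemma norm_interpolant_le_of_re_eq_one (hπ : IsPartitionOfUnity π) (hv : ∀ k, 0 < v k)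
    (hV₀ : 0 ≤ V) (hV : ∀ k, v k ≤ V) {T : F →L[ℂ] F} {δ : ℝ} (hδ : 0 ≤ δ)
    (hT : ∀ k, ‖T (π k ψ)‖ ≤ δ) (hz : z.re = 1) :
    ‖interpolant π v ψ T z‖ ≤ V * δ * ‖ψ‖ := by
  refine hπ.norm_synthesis_le (by positivity) fun k => ?_
  calc ‖T (cexp (z * logWeight π v ψ k) • π k ψ)‖
      = v k * ‖π k ψ‖ * ‖T (π k ψ)‖ := norm_map_cexp_mul_logWeight_smul hv hz T k
    _ ≤ V * ‖π k ψ‖ * δ := by gcongr; exacts [hV k, hT k]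
    _ = V * δ * ‖π k ψ‖ := by ring

variable {O : F →L[ℂ] F} {U : E →L[ℂ] E} {c ε : ℝ} {w : ℂ}

lemma norm_inner_interpolant_map_le_of_re_eq_one (hπ : IsPartitionOfUnity π)
    (hv : ∀ k, 0 < v k) (hc : ∀ j k, v j * v k * ‖π j ∘L U ∘L adjoint (π k) ∘L O‖ ≤ c)
    (hw : w.re = 1) (hz : z.re = 1) :
    ‖inner ℂ (interpolant π v ψ 1 w) (U (interpolant π v ψ O z))‖ ≤ c * ‖ψ‖ ^ 4 := by
  calc ‖inner ℂ (interpolant π v ψ 1 w) (U (interpolant π v ψ O z))‖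
      ≤ ∑ j, ∑ k, v j * ‖π j ψ‖ * ‖π j ψ‖ *
          (‖π j ∘L U ∘L adjoint (π k) ∘L O‖ * (v k * ‖π k ψ‖ * ‖π k ψ‖)) := by
        have hnorm {s : ℂ} (hs : s.re = 1) (k : ι) :=
          norm_map_cexp_mul_logWeight_smul (π := π) (ψ := ψ) hv hs 1 k
        simp only [one_apply_eq_self] at hnorm
        simpa only [interpolant, one_apply_eq_self, hnorm hw, hnorm hz] using
          norm_inner_synthesis_map_synthesis_le π U O
            (fun j => cexp (w * logWeight π v ψ j) • π j ψ)
            (fun k => cexp (z * logWeight π v ψ k) • π k ψ)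
    _ = ∑ j, ∑ k, ‖π j ψ‖ ^ 2 * ‖π k ψ‖ ^ 2 *
          (v j * v k * ‖π j ∘L U ∘L adjoint (π k) ∘L O‖) := by
        refine sum_congr rfl fun j _ => sum_congr rfl fun k _ => by ring
    _ ≤ ∑ j, ∑ k, ‖π j ψ‖ ^ 2 * ‖π k ψ‖ ^ 2 * c := by gcongr with j _ k _; exact hc j k
    _ = c * ‖ψ‖ ^ 4 := by
        simp only [← sum_mul, ← mul_sum, hπ.sum_norm_sq]
        ring

lemma norm_inner_interpolant_one_le_of_re_eq_one (hπ : IsPartitionOfUnity π)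
    (hv : ∀ k, 0 < v k) (hV₀ : 0 ≤ V) (hV : ∀ k, v k ≤ V) (hε : 0 ≤ ε)
    (hc : ∀ j k, v j * v k * ‖π j ∘L U ∘L adjoint (π k) ∘L O‖ ≤ c) (hU : ‖U‖ ≤ 1)
    (hloc : ∀ k, ‖(1 - O) (π k ψ)‖ ≤ ε) (hψ : ‖ψ‖ = 1) (hw : w.re = 1) (hz : z.re = 1) :
    ‖inner ℂ (interpolant π v ψ 1 w) (U (interpolant π v ψ 1 z))‖ ≤ c + V ^ 2 * ε := by
  have hO : ‖inner ℂ (interpolant π v ψ 1 w) (U (interpolant π v ψ O z))‖ ≤ c := by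
    simpa [hψ] using norm_inner_interpolant_map_le_of_re_eq_one (ψ := ψ) hπ hv hc hw hz
  have hleft : ‖interpolant π v ψ 1 w‖ ≤ V := by
    have hone (k : ι) : ‖(1 : F →L[ℂ] F) (π k ψ)‖ ≤ 1 := by simpa [hψ] using hπ.norm_apply_le k ψ
    simpa only [hψ, mul_one] using
      norm_interpolant_le_of_re_eq_one hπ hv hV₀ hV zero_le_one hone hw
  have hright : ‖U (interpolant π v ψ (1 - O) z)‖ ≤ V * ε := by
    refine (U.le_of_opNorm_le hU _).trans ?_
    simpa [hψ] using norm_interpolant_le_of_re_eq_one hπ hv hV₀ hV hε hloc hz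
  calc ‖inner ℂ (interpolant π v ψ 1 w) (U (interpolant π v ψ 1 z))‖
      = ‖inner ℂ (interpolant π v ψ 1 w) (U (interpolant π v ψ O z)) +
          inner ℂ (interpolant π v ψ 1 w) (U (interpolant π v ψ (1 - O) z))‖ := by
        rw [← inner_add_right, ← map_add, ← interpolant_add, add_sub_cancel]
    _ ≤ c + V * (V * ε) := norm_add_le_of_le hO <| (norm_inner_le_norm _ _).trans <|
        mul_le_mul hleft hright (norm_nonneg _) hV₀
    _ = c + V ^ 2 * ε := by ring

theorem exp_two_mul_sum_norm_sq_mul_logWeight_le (hπ : IsPartitionOfUnity π)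
    (hv : ∀ k, 0 < v k) (hV : ∀ k, v k ≤ V)
    (hc : ∀ j k, v j * v k * ‖π j ∘L U ∘L adjoint (π k) ∘L O‖ ≤ c) (hU : ‖U‖ ≤ 1)
    (hloc : ∀ k, ‖(1 - O) (π k ψ)‖ ≤ ε) (hψ : ‖ψ‖ = 1) {μ : ℂ} (hμ : ‖μ‖ = 1)
    (heig : U ψ = μ • ψ) :
    Real.exp (2 * ∑ k, ‖π k ψ‖ ^ 2 * logWeight π v ψ k) ≤ c + V ^ 2 * ε := by
  obtain ⟨k₀⟩ : Nonempty ι := not_isEmpty_iff.1 fun _ => by simpa [hψ] using hπ.sum_norm_sq ψ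
  have hV₀ : 0 ≤ V := (hv k₀).le.trans (hV k₀)
  have hε : 0 ≤ ε := (norm_nonneg _).trans (hloc k₀)
  have hsum : ∑ k, adjoint (π k) (π k ψ) = ψ := by rw [← synthesis_apply, hπ.synthesis_apply_self]
  have hinner (k : ι) : (inner ℂ ψ (adjoint (π k) (π k ψ))).re = ‖π k ψ‖ ^ 2 := by
    rw [adjoint_inner_right]
    exact inner_self_eq_norm_sq (𝕜 := ℂ) _
  simp only [← hinner, mul_comm _ (logWeight π v ψ _)]
  refine exp_two_mul_sum_mul_re_inner_le hU hμ hψ heig (logWeight π v ψ) hsum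
    (fun z hz => ?_) fun z hz => ?_ <;> rw [← interpolant_one]
  · have hbound {s : ℂ} (hs : s.re = 0) : ‖interpolant π v ψ 1 s‖ ≤ 1 :=
      (norm_interpolant_one_le_of_re_eq_zero hπ hs).trans_eq hψ
    refine (norm_inner_le_norm _ _).trans (mul_le_one₀ (hbound (by simpa)) (norm_nonneg _) ?_)
    simpa using U.le_of_opNorm_le_of_le hU (hbound hz)
  · exact norm_inner_interpolant_one_le_of_re_eq_one hπ hv hV₀ hV hε hc hU hloc hψ (by simpa) hz

end Interpolation

lemma neg_pressure_eq_two_mul_sum {H : Type*} [NormedAddCommGroup H] [InnerProductSpace ℂ H]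
    {N : ℕ} (π : Fin N → H →L[ℂ] H) {v : Fin N → ℝ} (hv : ∀ k, 0 < v k) (ψ : H) :
    -pressure π v ψ = 2 * ∑ k, ‖π k ψ‖ ^ 2 * logWeight π v ψ k := by
  rw [pressure, ← sum_sub_distrib, ← sum_neg_distrib, mul_sum]
  refine sum_congr rfl fun k _ => ?_
  by_cases hk : ‖π k ψ‖ = 0
  · simp [hk, eta]
  · rw [logWeight, eta, Real.log_mul (hv k).ne' hk, Real.log_pow, Real.log_pow]
    push_cast
    ring

/-- The exponential form also asserts `0 < c + V ^ 2 * ε`, so that taking logarithms is harmless. -/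
theorem pressure_lower_bound_eigenvector_general
    {H : Type*} [NormedAddCommGroup H] [InnerProductSpace ℂ H] [CompleteSpace H]
    {N : ℕ} {π : Fin N → H →L[ℂ] H} (hπ : IsPartitionOfUnity π)
    {v : Fin N → ℝ} (hv : ∀ k, 0 < v k) {V : ℝ} (hV : ∀ k, v k ≤ V)
    {O U : H →L[ℂ] H} (hU : ‖U‖ ≤ 1) {c : ℝ}
    (hc : ∀ j k, v j * v k * ‖π j ∘L U ∘L adjoint (π k) ∘L O‖ ≤ c)
    {ψ : H} (hψ : ‖ψ‖ = 1) {lam : ℂ} (hlam : ‖lam‖ = 1) (heig : U ψ = lam • ψ)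
    {ε : ℝ} (hloc : ∀ k, ‖(1 - O) (π k ψ)‖ ≤ ε) :
    Real.exp (-pressure π v ψ) ≤ c + V ^ 2 * ε := by
  rw [neg_pressure_eq_two_mul_sum π hv]
  exact exp_two_mul_sum_norm_sq_mul_logWeight_le hπ hv hV hc hU hloc hψ hlam heig

/-- Pressure lower bound for eigenvectors, weighted version. -/
theorem pressure_lower_bound_eigenvector
    {H : Type*} [NormedAddCommGroup H] [InnerProductSpace ℂ H] [CompleteSpace H]
    {N : ℕ} [NeZero N]
    (π : Fin N → H →L[ℂ] H)
    (hπ : ∑ k, ContinuousLinearMap.adjoint (π k) ∘L π k = (1 : H →L[ℂ] H))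
    (v : Fin N → ℝ) (hv : ∀ k, 0 < v k)
    (V : ℝ) (hV : V = Finset.univ.sup' Finset.univ_nonempty v)
    (O : H →L[ℂ] H)
    (U : H →L[ℂ] H) (hU : U ∈ unitary (H →L[ℂ] H))
    (ε : ℝ) (hε : 0 ≤ ε)
    (c : ℝ)
    (hc : c = Finset.univ.sup' Finset.univ_nonempty fun jk : Fin N × Fin N =>
        v jk.1 * v jk.2 * ‖π jk.1 ∘L U ∘L ContinuousLinearMap.adjoint (π jk.2) ∘L O‖)
    (ψ : H) (hψ : ‖ψ‖ = 1)
    (lam : ℂ) (hlam : ‖lam‖ = 1) (heig : U ψ = lam • ψ)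
    (hloc : ∀ k, ‖((1 : H →L[ℂ] H) - O) (π k ψ)‖ ≤ ε) :
    pressure π v ψ ≥ -Real.log (c + N * V ^ 2 * ε) := by
  have hexp : Real.exp (-pressure π v ψ) ≤ c + V ^ 2 * ε :=
    pressure_lower_bound_eigenvector_general hπ hv (fun k => hV ▸ le_sup' v (mem_univ k))
      (opNorm_le_bound U zero_le_one fun x => by rw [norm_map_of_mem_unitary hU, one_mul])
      (fun j k => hc ▸ le_sup' (fun jk : Fin N × Fin N => v jk.1 * v jk.2 *
        ‖π jk.1 ∘L U ∘L adjoint (π jk.2) ∘L O‖) (mem_univ (j, k))) hψ hlam heig hloc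
  have hN : V ^ 2 * ε ≤ N * V ^ 2 * ε := by
    rw [mul_assoc]
    exact le_mul_of_one_le_left (by positivity) (Nat.one_le_cast.2 NeZero.one_le)
  have hbound : Real.exp (-pressure π v ψ) ≤ c + N * V ^ 2 * ε := hexp.trans (by gcongr)
  exact neg_le.1 ((Real.le_log_iff_exp_le ((Real.exp_pos _).trans_le hbound)).2 hbound)
end

section
/- Entropy bound for a weak limit of measures with uniformly decaying cylinder measures: let X be a compact metric space, T : X → X a continuous map, and P = (E_1, …, E_K) a finite partition of X into Borel sets. Let (μ_i)_{i∈ℕ} and μ be Borel probability measures on X, each invariant under T, such that μ_i → μ weakly and μ(∂E_k) = 0 for every k. Suppose there exists β ∈ ℝ such that for every i there is a constant C_i > 0 with μ_i(E_α) ≤ C_i·e^{−βn} for all n ≥ 1 and all α ∈ {1,…,K}^n. Then h_KS(μ,P) ≥ β, where h_KS(ν,P) := inf_{n≥1} h_n(ν,P)/n. -/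
open MeasureTheory Finset Filter

/-- Cylinder set `E_α = E_{α_0} ∩ T⁻¹E_{α_1} ∩ … ∩ T^{-(n-1)}E_{α_{n-1}}`. -/
def cyl {X : Type*} {K : ℕ} (T : X → X) (E : Fin K → Set X)
    (n : ℕ) (α : Fin n → Fin K) : Set X :=
  ⋂ j : Fin n, T^[(j : ℕ)] ⁻¹' E (α j)

/-- Refined entropy `h_n(μ, P) = Σ_α η(μ(E_α))`. -/
noncomputable def refEntropy {X : Type*} [MeasurableSpace X] (μ : Measure X)
    {K : ℕ} (T : X → X) (E : Fin K → Set X) (n : ℕ) : ℝ :=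
  ∑ α : Fin n → Fin K, eta (μ (cyl T E n α)).toReal

/-- Entropy of an invariant measure relative to the partition:
`h_KS(ν, P) = inf_{n ≥ 1} h_n(ν, P)/n`. -/
noncomputable def hKS {X : Type*} [MeasurableSpace X] (μ : Measure X)
    {K : ℕ} (T : X → X) (E : Fin K → Set X) : ℝ :=
  ⨅ n : {m : ℕ // 1 ≤ m}, refEntropy μ T E n / (n : ℝ)

/-!
Write `h_n` for the refined entropy. If all cylinders of length `n` have `ν`-measure at most
`C e^{-βn}`, then `h_n(ν) ≥ βn - log C`. For invariant `ν` the sequence `h_n(ν)` is subadditive, so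
by Fekete's lemma `h_n(ν)/n` tends to its infimum `h_KS(ν)`, and dividing by `n` removes the
constant: `h_KS(ν) ≥ β`, however large `C` is. For a fixed `n`, `h_n` is continuous along the weak
limit since cylinders are continuity sets of `μ`; an infimum of such functions is upper
semicontinuous, so the bound, which no longer involves the `C_i`, survives in the limit.
-/

section FiniteEntropy

variable {ι A B : Type*} [Fintype ι] [Fintype A] [Fintype B]

lemma continuous_eta : Continuous eta := Real.continuous_negMulLog

lemma eta_nonneg {s : ℝ} (h₀ : 0 ≤ s) (h₁ : s ≤ 1) : 0 ≤ eta s := Real.negMulLog_nonneg h₀ h₁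

lemma eta_le_neg_mul_log_add_sub {s t : ℝ} (hs : 0 ≤ s) (ht : 0 ≤ t) (hst : t = 0 → s = 0) :
    eta s ≤ -(s * Real.log t) + (t - s) := by
  rcases hs.eq_or_lt with rfl | hs
  · simpa [eta] using ht
  have ht : 0 < t := ht.lt_of_ne' fun h => hs.ne' (hst h)
  have hlog : Real.log t - Real.log s ≤ t / s - 1 := by
    simpa only [Real.log_div ht.ne' hs.ne'] using Real.log_le_sub_one_of_pos (div_pos ht hs)
  calc eta s = s * (Real.log t - Real.log s) - s * Real.log t := by rw [eta]; ring
    _ ≤ s * (t / s - 1) - s * Real.log t := by gcongr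
    _ = -(s * Real.log t) + (t - s) := by field_simp; ring

lemma sum_eta_le_neg_sum_mul_log {p q : ι → ℝ} (hp : ∀ i, 0 ≤ p i) (hq : ∀ i, 0 ≤ q i)
    (hpq : ∀ i, q i = 0 → p i = 0) (hsum : ∑ i, q i ≤ ∑ i, p i) :
    ∑ i, eta (p i) ≤ -∑ i, p i * Real.log (q i) :=
  calc ∑ i, eta (p i) ≤ ∑ i, (-(p i * Real.log (q i)) + (q i - p i)) :=
        sum_le_sum fun i _ => eta_le_neg_mul_log_add_sub (hp i) (hq i) (hpq i)
    _ = -∑ i, p i * Real.log (q i) + (∑ i, q i - ∑ i, p i) := by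
        rw [sum_add_distrib, sum_neg_distrib, sum_sub_distrib]
    _ ≤ -∑ i, p i * Real.log (q i) := by linarith

lemma sum_eta_le_sum_eta_marginals {p : A × B → ℝ} (hp : p ∈ stdSimplex ℝ (A × B)) :
    ∑ x, eta (p x) ≤ ∑ a, eta (∑ b, p (a, b)) + ∑ b, eta (∑ a, p (a, b)) := by
  obtain ⟨hp0, hp1⟩ := hp
  set u : A → ℝ := fun a => ∑ b, p (a, b)
  set v : B → ℝ := fun b => ∑ a, p (a, b)
  have hu : ∀ a, 0 ≤ u a := fun a => sum_nonneg fun b _ => hp0 (a, b)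
  have hv : ∀ b, 0 ≤ v b := fun b => sum_nonneg fun a _ => hp0 (a, b)
  have hu_zero : ∀ a b, u a = 0 → p (a, b) = 0 := fun a b h =>
    (sum_eq_zero_iff_of_nonneg fun b _ => hp0 (a, b)).1 h b (mem_univ b)
  have hv_zero : ∀ a b, v b = 0 → p (a, b) = 0 := fun a b h =>
    (sum_eq_zero_iff_of_nonneg fun a _ => hp0 (a, b)).1 h a (mem_univ a)
  have hu1 : ∑ a, u a = 1 := by rw [← hp1, Fintype.sum_prod_type]
  have hv1 : ∑ b, v b = 1 := by rw [← hp1, Fintype.sum_prod_type_right]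
  have huv : ∑ x : A × B, u x.1 * v x.2 = ∑ x, p x := by
    rw [Fintype.sum_prod_type, ← Fintype.sum_mul_sum, hu1, hv1, hp1, one_mul]
  have hfst : ∑ x : A × B, p x * Real.log (u x.1) = ∑ a, u a * Real.log (u a) := by
    simp only [Fintype.sum_prod_type, ← sum_mul, u]
  have hsnd : ∑ x : A × B, p x * Real.log (v x.2) = ∑ b, v b * Real.log (v b) := by
    simp only [Fintype.sum_prod_type_right, ← sum_mul, v]
  have hlog : ∀ x : A × B, p x * Real.log (u x.1 * v x.2) =
      p x * Real.log (u x.1) + p x * Real.log (v x.2) := by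
    rintro ⟨a, b⟩
    by_cases h : p (a, b) = 0
    · simp only [h, zero_mul, add_zero]
    · rw [Real.log_mul (mt (hu_zero a b) h) (mt (hv_zero a b) h), mul_add]
  -- Gibbs' inequality against the product of the marginals
  calc ∑ x, eta (p x) ≤ -∑ x : A × B, p x * Real.log (u x.1 * v x.2) :=
        sum_eta_le_neg_sum_mul_log hp0 (fun x => mul_nonneg (hu x.1) (hv x.2))
          (fun x h => (mul_eq_zero.1 h).elim (hu_zero x.1 x.2) (hv_zero x.1 x.2)) huv.le
    _ = -∑ a, u a * Real.log (u a) + -∑ b, v b * Real.log (v b) := by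
        rw [sum_congr rfl fun x _ => hlog x, sum_add_distrib, hfst, hsnd, neg_add]
    _ = ∑ a, eta (u a) + ∑ b, eta (v b) := by
        simp only [eta, neg_mul, sum_neg_distrib]

lemma neg_log_le_sum_eta {p : ι → ℝ} (hp : p ∈ stdSimplex ℝ ι) {c : ℝ} (hc : ∀ i, p i ≤ c) :
    -Real.log c ≤ ∑ i, eta (p i) := by
  have hterm : ∀ i, p i * -Real.log c ≤ eta (p i) := fun i => by
    rcases (hp.1 i).eq_or_lt with h | h
    · simp [← h, eta]
    · have hlog := Real.log_le_log h (hc i)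
      rw [eta, neg_mul, ← mul_neg]
      gcongr
  calc -Real.log c = ∑ i, p i * -Real.log c := by rw [← sum_mul, hp.2, one_mul]
    _ ≤ ∑ i, eta (p i) := sum_le_sum fun i _ => hterm i

end FiniteEntropy

/-- An indexed measurable partition: the family `E` plays the role of `P = (E_1, …, E_K)`, and its
cylinders form another such family. Pieces may be empty. -/
structure IsMeasurablePartition {ι X : Type*} [MeasurableSpace X] (E : ι → Set X) : Prop where
  measurableSet : ∀ i, MeasurableSet (E i)
  pairwise_disjoint : Pairwise (Function.onFun Disjoint E)
  iUnion_eq_univ : ⋃ i, E i = Set.univ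

namespace IsMeasurablePartition

variable {ι κ X Y : Type*} [MeasurableSpace X] [MeasurableSpace Y] {E : ι → Set X}

lemma preimage (hE : IsMeasurablePartition E) {f : Y → X} (hf : Measurable f) :
    IsMeasurablePartition fun i => f ⁻¹' E i where
  measurableSet i := hf (hE.measurableSet i)
  pairwise_disjoint _ _ hij := (hE.pairwise_disjoint hij).preimage f
  iUnion_eq_univ := by rw [← Set.preimage_iUnion, hE.iUnion_eq_univ, Set.preimage_univ]

lemma iInter [Countable κ] {F : κ → ι → Set X} (hF : ∀ j, IsMeasurablePartition (F j)) :
    IsMeasurablePartition fun α : κ → ι => ⋂ j, F j (α j) where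
  measurableSet α := .iInter fun j => (hF j).measurableSet (α j)
  pairwise_disjoint α α' h := by
    obtain ⟨j, hj⟩ := Function.ne_iff.1 h
    exact ((hF j).pairwise_disjoint hj).mono (Set.iInter_subset _ j) (Set.iInter_subset _ j)
  iUnion_eq_univ := by
    refine Set.eq_univ_of_forall fun x => ?_
    have hmem : ∀ j, ∃ i, x ∈ F j i := fun j => Set.iUnion_eq_univ_iff.1 (hF j).iUnion_eq_univ x
    choose α hα using hmem
    exact Set.mem_iUnion.2 ⟨α, Set.mem_iInter.2 hα⟩

lemma sum_measureReal_inter [Fintype ι] (hE : IsMeasurablePartition E) (ν : Measure X)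
    [IsFiniteMeasure ν] (S : Set X) : ∑ i, ν.real (E i ∩ S) = ν.real S := by
  rw [← measureReal_restrict_apply_univ, ← hE.iUnion_eq_univ,
    measureReal_iUnion_fintype hE.pairwise_disjoint hE.measurableSet]
  exact sum_congr rfl fun i _ => (measureReal_restrict_apply (hE.measurableSet i)).symm

lemma measureReal_mem_stdSimplex [Fintype ι] (hE : IsMeasurablePartition E) (ν : Measure X)
    [IsProbabilityMeasure ν] : (fun i => ν.real (E i)) ∈ stdSimplex ℝ ι :=
  ⟨fun _ => measureReal_nonneg, by simpa using hE.sum_measureReal_inter ν Set.univ⟩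

end IsMeasurablePartition

section Entropy

variable {X : Type*} {K : ℕ} {T : X → X} {E : Fin K → Set X}

lemma cyl_append (T : X → X) (E : Fin K → Set X) {m n : ℕ} (α : Fin m → Fin K)
    (α' : Fin n → Fin K) :
    cyl T E (m + n) (Fin.append α α') = cyl T E m α ∩ T^[m] ⁻¹' cyl T E n α' := by
  ext x
  simp only [cyl, Set.mem_iInter, Set.mem_inter_iff, Set.mem_preimage, Fin.forall_fin_add,
    Fin.append_left, Fin.append_right, Fin.val_castAdd, Fin.val_natAdd,
    ← Function.iterate_add_apply, add_comm m]

variable [MeasurableSpace X]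

protected lemma IsMeasurablePartition.cyl (hE : IsMeasurablePartition E) (hT : Measurable T)
    (n : ℕ) : IsMeasurablePartition (cyl T E n) :=
  .iInter fun j : Fin n => hE.preimage (hT.iterate j)

lemma refEntropy_nonneg (ν : Measure X) [IsProbabilityMeasure ν] (T : X → X) (E : Fin K → Set X)
    (n : ℕ) : 0 ≤ refEntropy ν T E n :=
  sum_nonneg fun _ _ => eta_nonneg measureReal_nonneg measureReal_le_one

lemma bddBelow_range_refEntropy_div (ν : Measure X) [IsProbabilityMeasure ν] (T : X → X)
    (E : Fin K → Set X) : BddBelow (Set.range fun n : ℕ => refEntropy ν T E n / n) :=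
  ⟨0, Set.forall_mem_range.2 fun n => div_nonneg (refEntropy_nonneg ν T E n) n.cast_nonneg⟩

lemma hKS_le_refEntropy_div (ν : Measure X) [IsProbabilityMeasure ν] (T : X → X)
    (E : Fin K → Set X) {n : ℕ} (hn : 1 ≤ n) : hKS ν T E ≤ refEntropy ν T E n / n :=
  ciInf_le ((bddBelow_range_refEntropy_div ν T E).mono
    (Set.range_comp_subset_range Subtype.val fun n : ℕ => refEntropy ν T E n / n))
    (⟨n, hn⟩ : {m : ℕ // 1 ≤ m})

variable {ν : Measure X} [IsProbabilityMeasure ν]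

lemma subadditive_refEntropy (hE : IsMeasurablePartition E) (hν : MeasurePreserving T ν ν) :
    Subadditive (refEntropy ν T E) := by
  intro m n
  have hEm := hE.cyl hν.measurable m
  have hEn := hE.cyl hν.measurable n
  let p : (Fin m → Fin K) × (Fin n → Fin K) → ℝ :=
    fun x => ν.real (cyl T E (m + n) (Fin.appendEquiv m n x))
  have hp (α : Fin m → Fin K) (α' : Fin n → Fin K) :
      p (α, α') = ν.real (cyl T E m α ∩ T^[m] ⁻¹' cyl T E n α') :=
    congrArg ν.real (cyl_append T E α α')
  have hp_mem : p ∈ stdSimplex ℝ _ :=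
    ⟨fun _ => measureReal_nonneg, ((Fin.appendEquiv m n).sum_comp _).trans
      ((hE.cyl hν.measurable (m + n)).measureReal_mem_stdSimplex ν).2⟩
  have hfst (α : Fin m → Fin K) : ∑ α', p (α, α') = ν.real (cyl T E m α) := by
    simp only [hp, Set.inter_comm (cyl T E m α)]
    exact (hEn.preimage (hν.measurable.iterate m)).sum_measureReal_inter ν _
  have hsnd (α' : Fin n → Fin K) : ∑ α, p (α, α') = ν.real (cyl T E n α') := by
    simp only [hp]
    rw [hEm.sum_measureReal_inter,
      (hν.iterate m).measureReal_preimage (hEn.measurableSet α').nullMeasurableSet]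
  calc refEntropy ν T E (m + n) = ∑ x, eta (p x) := ((Fin.appendEquiv m n).sum_comp _).symm
    _ ≤ ∑ α, eta (∑ α', p (α, α')) + ∑ α', eta (∑ α, p (α, α')) :=
        sum_eta_le_sum_eta_marginals hp_mem
    _ = refEntropy ν T E m + refEntropy ν T E n := by simp only [hfst, hsnd]; rfl

lemma tendsto_refEntropy_div (hE : IsMeasurablePartition E) (hν : MeasurePreserving T ν ν) :
    Tendsto (fun n : ℕ => refEntropy ν T E n / n) atTop (nhds (hKS ν T E)) := by
  have hsub := subadditive_refEntropy hE hν
  have hlim : hsub.lim = hKS ν T E := by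
    rw [Subadditive.lim, sInf_image']
    rfl
  exact hlim ▸ hsub.tendsto_lim (bddBelow_range_refEntropy_div ν T E)

lemma neg_log_le_refEntropy (hE : IsMeasurablePartition E) (hT : Measurable T) {n : ℕ} {c : ℝ}
    (hc : ∀ α, ν.real (cyl T E n α) ≤ c) : -Real.log c ≤ refEntropy ν T E n :=
  neg_log_le_sum_eta ((hE.cyl hT n).measureReal_mem_stdSimplex ν) hc

lemma le_hKS_of_eventually_measure_cyl_le (hE : IsMeasurablePartition E)
    (hν : MeasurePreserving T ν ν) {β C : ℝ} (hC : 0 < C)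
    (hdecay : ∀ᶠ n : ℕ in atTop, ∀ α : Fin n → Fin K,
      ν (cyl T E n α) ≤ ENNReal.ofReal (C * Real.exp (-β * n))) :
    β ≤ hKS ν T E := by
  have hlower : ∀ᶠ n : ℕ in atTop, β - Real.log C / n ≤ refEntropy ν T E n / n := by
    filter_upwards [hdecay, eventually_gt_atTop 0] with n hn hpos
    have : (0 : ℝ) < n := Nat.cast_pos.2 hpos
    have hlog : Real.log (C * Real.exp (-β * n)) = Real.log C - β * n := by
      rw [Real.log_mul hC.ne' (Real.exp_pos _).ne', Real.log_exp]
      ring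
    calc β - Real.log C / n = -Real.log (C * Real.exp (-β * n)) / n := by
          rw [hlog]; field_simp; ring
      _ ≤ refEntropy ν T E n / n := by
          gcongr
          exact neg_log_le_refEntropy hE hν.measurable fun α =>
            ENNReal.toReal_le_of_le_ofReal (by positivity) (hn α)
  have hlim : Tendsto (fun n : ℕ => β - Real.log C / n) atTop (nhds β) := by
    simpa using tendsto_const_nhds.sub (tendsto_const_div_atTop_nhds_zero_nat (Real.log C))
  exact le_of_tendsto_of_tendsto hlim (tendsto_refEntropy_div hE hν) hlower

end Entropy

section WeakLimit

lemma frontier_iInter_subset {X κ : Type*} [TopologicalSpace X] [Finite κ] (S : κ → Set X) :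
    frontier (⋂ j, S j) ⊆ ⋃ j, frontier (S j) := by
  intro x ⟨hcl, hint⟩
  rw [interior_iInter_of_finite, Set.mem_iInter, not_forall] at hint
  obtain ⟨j, hj⟩ := hint
  exact Set.mem_iUnion.2 ⟨j, closure_mono (Set.iInter_subset _ j) hcl, hj⟩

variable {X ι : Type*} [TopologicalSpace X] [MeasurableSpace X] {K : ℕ} {T : X → X}
  {E : Fin K → Set X} {L : Filter ι} {μs : ι → ProbabilityMeasure X} {μ : ProbabilityMeasure X}

lemma measure_frontier_cyl_eq_zero [OpensMeasurableSpace X] (hT : Continuous T) {ν : Measure X}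
    (hν : MeasurePreserving T ν ν) (hE : ∀ k, ν (frontier (E k)) = 0) {n : ℕ}
    (α : Fin n → Fin K) : ν (frontier (cyl T E n α)) = 0 := by
  refine measure_mono_null (frontier_iInter_subset _) (measure_iUnion_null fun j => ?_)
  refine measure_mono_null ((hT.iterate j).frontier_preimage_subset _) ?_
  rw [(hν.iterate j).measure_preimage isClosed_frontier.measurableSet.nullMeasurableSet, hE]

lemma measurePreserving_of_tendsto [BorelSpace X] [HasOuterApproxClosed X] [L.NeBot]
    (hT : Continuous T) (hμs : ∀ᶠ i in L, MeasurePreserving T (μs i : Measure X) (μs i))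
    (hconv : Tendsto μs L (nhds μ)) : MeasurePreserving T (μ : Measure X) μ := by
  have hmap : Tendsto μs L (nhds (μ.map hT.measurable.aemeasurable)) :=
    (ProbabilityMeasure.tendsto_map_of_tendsto_of_continuous μs μ hconv hT).congr' <|
      hμs.mono fun _ hi => Subtype.ext hi.map_eq
  have heq : μ.map hT.measurable.aemeasurable = μ := tendsto_nhds_unique hmap hconv
  exact ⟨hT.measurable, congrArg Subtype.val heq⟩

variable [OpensMeasurableSpace X] [HasOuterApproxClosed X]

lemma tendsto_refEntropy (hconv : Tendsto μs L (nhds μ)) {n : ℕ}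
    (hnull : ∀ α : Fin n → Fin K, (μ : Measure X) (frontier (cyl T E n α)) = 0) :
    Tendsto (fun i => refEntropy (μs i : Measure X) T E n) L
      (nhds (refEntropy (μ : Measure X) T E n)) :=
  tendsto_finsetSum _ fun α _ => (continuous_eta.tendsto _).comp <|
    (ENNReal.tendsto_toReal (measure_ne_top _ _)).comp <|
      ProbabilityMeasure.tendsto_measure_of_null_frontier_of_tendsto' hconv (hnull α)

lemma le_hKS_of_tendsto [L.NeBot] (hconv : Tendsto μs L (nhds μ))
    (hnull : ∀ n, ∀ α : Fin n → Fin K, (μ : Measure X) (frontier (cyl T E n α)) = 0) {β : ℝ}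
    (hβ : ∀ᶠ i in L, β ≤ hKS (μs i : Measure X) T E) : β ≤ hKS (μ : Measure X) T E := by
  have : Nonempty {m : ℕ // 1 ≤ m} := ⟨⟨1, le_rfl⟩⟩
  refine le_ciInf fun ⟨n, hn⟩ => ?_
  refine ge_of_tendsto ((tendsto_refEntropy hconv (hnull n)).div_const (n : ℝ)) ?_
  exact hβ.mono fun i hi => hi.trans (hKS_le_refEntropy_div _ T E hn)

end WeakLimit

theorem hKS_lower_bound_of_uniform_decay_general
    {X ι : Type*} [TopologicalSpace X] [HasOuterApproxClosed X] [MeasurableSpace X] [BorelSpace X]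
    {T : X → X} (hT : Continuous T) {K : ℕ} {E : Fin K → Set X} (hE : IsMeasurablePartition E)
    {L : Filter ι} [L.NeBot] {μs : ι → ProbabilityMeasure X} {μ : ProbabilityMeasure X}
    (hinv : ∀ᶠ i in L, MeasurePreserving T (μs i : Measure X) (μs i : Measure X))
    (hconv : Tendsto μs L (nhds μ)) (hbd : ∀ k, (μ : Measure X) (frontier (E k)) = 0) {β : ℝ}
    (hdecay : ∀ᶠ i in L, ∃ C : ℝ, 0 < C ∧ ∀ᶠ n : ℕ in atTop, ∀ α : Fin n → Fin K,
      (μs i : Measure X) (cyl T E n α) ≤ ENNReal.ofReal (C * Real.exp (-β * n))) :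
    β ≤ hKS (μ : Measure X) T E := by
  have hinvμ := measurePreserving_of_tendsto hT hinv hconv
  refine le_hKS_of_tendsto hconv (fun _ => measure_frontier_cyl_eq_zero hT hinvμ hbd) ?_
  filter_upwards [hinv, hdecay] with i hi ⟨C, hC, hbound⟩
  exact le_hKS_of_eventually_measure_cyl_le hE hi hC hbound

/-- Entropy bound for a weak limit of measures with uniformly decaying cylinder
measures. -/
theorem hKS_lower_bound_of_uniform_decay
    {X : Type*} [MetricSpace X] [CompactSpace X] [MeasurableSpace X] [BorelSpace X]
    (T : X → X) (hTcont : Continuous T)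
    {K : ℕ} (E : Fin K → Set X)
    (hmeas : ∀ k, MeasurableSet (E k))
    (hdisj : Pairwise (Function.onFun Disjoint E))
    (hcover : (⋃ k, E k) = Set.univ)
    (μs : ℕ → ProbabilityMeasure X) (μ : ProbabilityMeasure X)
    (hinv : ∀ i, MeasurePreserving T (μs i : Measure X) (μs i : Measure X))
    (hinvμ : MeasurePreserving T (μ : Measure X) (μ : Measure X))
    (hconv : Tendsto μs atTop (nhds μ))
    (hbd : ∀ k, (μ : Measure X) (frontier (E k)) = 0)
    (β : ℝ)
    (hdecay : ∀ i : ℕ, ∃ C : ℝ, 0 < C ∧ ∀ n : ℕ, 1 ≤ n → ∀ α : Fin n → Fin K,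
      (μs i : Measure X) (cyl T E n α) ≤ ENNReal.ofReal (C * Real.exp (-β * n))) :
    hKS (μ : Measure X) T E ≥ β :=
  hKS_lower_bound_of_uniform_decay_general hTcont ⟨hmeas, hdisj, hcover⟩ (.of_forall hinv) hconv hbd
    (.of_forall fun i => (hdecay i).imp fun _ h => ⟨h.1, (eventually_ge_atTop 1).mono h.2⟩)
end
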